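/- arXiv:2009.06189 — 2 statements merged into one kernel-verified Lean document; each statement's English description precedes it below -/
import Mathlib

section
/- For every n ≥ 1 and every z ∈ ℂ, ∫₀¹ log‖B_n(x,z)‖ dx ≥ log‖M^n‖, where M is the constant matrix M = [[−(αz+2λ), α],[−α, 0]]. -/
open scoped Real

/-- The quasi-periodic potential `v(x) = 2λcos(2πx)/(1 - αcos(2πx))`. -/
noncomputable def potV (α lam : ℝ) (x : ℝ) : ℝ :=
  2 * lam * Real.cos (2 * Real.pi * x) / (1 - α * Real.cos (2 * Real.pi * x))

/-- One-step transfer matrix `A(x,z) = [[z - V x, -1],[1,0]]`. -/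
noncomputable def tMat (V : ℝ → ℝ) (x : ℝ) (z : ℂ) : Matrix (Fin 2) (Fin 2) ℂ :=
  !![z - (V x : ℝ), -1; 1, 0]

/-- The `n`-step transfer matrix `A_n(x,z) = A(x+(n-1)b,z) ⋯ A(x+b,z) A(x,z)`. -/
noncomputable def tProd (V : ℝ → ℝ) (b : ℝ) (n : ℕ) (x : ℝ) (z : ℂ) :
    Matrix (Fin 2) (Fin 2) ℂ :=
  (((List.range n).reverse).map (fun j => tMat V (x + (j : ℝ) * b) z)).prod

/-- The operator norm of a 2×2 complex matrix, acting on the Euclidean space `ℂ²`. -/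
noncomputable def opNorm2 (M : Matrix (Fin 2) (Fin 2) ℂ) : ℝ :=
  ‖Matrix.toEuclideanCLM (𝕜 := ℂ) M‖

/-- The Lyapunov exponent `L(z) = lim_n (1/n)∫₀¹ log‖A_n(x,z)‖ dx`; the limit exists and
equals `inf_{n ≥ 1} (1/n)∫₀¹ log‖A_n(x,z)‖ dx` by subadditivity, so we take that as the
definition. -/
noncomputable def lyap (V : ℝ → ℝ) (b : ℝ) (z : ℂ) : ℝ :=
  ⨅ n : ℕ+, ((n : ℝ))⁻¹ * ∫ x in (0:ℝ)..(1:ℝ), Real.log (opNorm2 (tProd V b n x z))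

/-- The matrix `B(x,z) = (2 - 2αcos(2πx)) A(x,z)`. -/
noncomputable def bMat (α lam : ℝ) (x : ℝ) (z : ℂ) : Matrix (Fin 2) (Fin 2) ℂ :=
  ((2 - 2 * α * Real.cos (2 * Real.pi * x) : ℝ) : ℂ) • tMat (potV α lam) x z

/-- The product `B_n(x,z) = B(x+(n-1)b,z) ⋯ B(x+b,z) B(x,z)`. -/
noncomputable def bProd (α lam b : ℝ) (n : ℕ) (x : ℝ) (z : ℂ) :
    Matrix (Fin 2) (Fin 2) ℂ :=
  (((List.range n).reverse).map (fun j => bMat α lam (x + (j : ℝ) * b) z)).prod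

/-!
Multiplied by the unimodular factor `w = e^{2πix}`, the matrix `B(x,z)` becomes a quadratic matrix
polynomial in `w` whose value at `w = 0` is `M` (Herman's trick). The shift `x ↦ x + b` becomes the
rotation `w ↦ e^{2πib} w`, which fixes `0`, so `‖B_n(x,z)‖` is the norm at `w = e^{2πix}` of an
entire matrix function with value `M^n` at `0`. The logarithm of this norm is subharmonic: compose
with a functional norming `M^n` and apply Jensen's formula. Hence its value at the centre is at most
its average over the unit circle.

If `M^n = 0` the left-hand side is really `-∞`, but Lean's `log 0` is `0`. In that case `α = 0`, and
`det B_n(x,z) = 4^n` forces `‖B_n(x,z)‖ ≥ 1`, so the integral is nonnegative.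
-/

section Jensen

open Metric Filter MeasureTheory

theorem log_norm_le_circleAverage_log_norm_of_complex {f : ℂ → ℂ} {c : ℂ} {R : ℝ} (hR : R ≠ 0)
    (hf : AnalyticOnNhd ℂ f (closedBall c |R|)) (hc : f c ≠ 0) :
    Real.log ‖f c‖ ≤ Real.circleAverage (fun w => Real.log ‖f w‖) c R := by
  rw [hf.circleAverage_log_norm hR hc, le_add_iff_nonneg_left]
  refine finsum_nonneg fun u => ?_
  by_cases hu : u ∈ closedBall c |R|
  · refine mul_nonneg (mod_cast MeromorphicOn.AnalyticOnNhd.divisor_nonneg hf u) ?_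
    rw [← Real.log_abs, abs_mul, abs_inv, abs_norm]
    rcases eq_or_ne c u with rfl | hcu
    · simp
    · rw [← div_eq_mul_inv, ← dist_eq_norm, dist_comm]
      exact Real.log_nonneg ((one_le_div (dist_pos.2 hcu.symm)).2 hu)
  · rw [Function.locallyFinsuppWithin.apply_eq_zero_of_notMem _ hu, Int.cast_zero, zero_mul]

theorem eventually_ne_zero_codiscreteWithin_sphere {f : ℂ → ℂ} {c : ℂ} {R : ℝ}
    (hf : AnalyticOnNhd ℂ f (closedBall c |R|)) (hc : f c ≠ 0) :
    ∀ᶠ w in codiscreteWithin (sphere c |R|), f w ≠ 0 :=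
  codiscreteWithin_mono sphere_subset_closedBall <|
    hf.preimage_zero_mem_codiscreteWithin hc (mem_closedBall_self (abs_nonneg R))
      ((convex_closedBall c |R|).isConnected (nonempty_closedBall.2 (abs_nonneg R)))

theorem ae_circleMap_of_codiscreteWithin {p : ℂ → Prop} {c : ℂ} {R : ℝ} (hR : R ≠ 0)
    (hp : ∀ᶠ w in codiscreteWithin (sphere c |R|), p w) : ∀ᵐ θ : ℝ, p (circleMap c R θ) := by
  rw [← Measure.restrict_univ (μ := volume)]
  exact ae_restrict_le_codiscreteWithin MeasurableSet.univ (circleMap_preimage_codiscrete hR hp)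

theorem circleAverage_mono_codiscreteWithin {f g : ℂ → ℝ} {c : ℂ} {R : ℝ} (hR : R ≠ 0)
    (hf : CircleIntegrable f c R) (hg : CircleIntegrable g c R)
    (h : f ≤ᶠ[codiscreteWithin (sphere c |R|)] g) :
    Real.circleAverage f c R ≤ Real.circleAverage g c R := by
  have hmin : (fun w => min (f w) (g w)) =ᶠ[codiscreteWithin (sphere c |R|)] f := by
    filter_upwards [h] with w hw using min_eq_left hw
  rw [← Real.circleAverage_congr_codiscreteWithin hmin hR]
  exact Real.circleAverage_mono (hf.congr_codiscreteWithin hmin.symm) hg fun w _ => min_le_right _ _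

variable {E : Type*} [NormedAddCommGroup E] [NormedSpace ℂ E] {F : ℂ → E} {c : ℂ} {R : ℝ}

/-- A norming functional `g` at `F c` satisfies `log ‖g (F w)‖ ≤ log ‖F w‖` wherever
`g (F w) ≠ 0`; at the zeros of `g ∘ F` the convention `log 0 = 0` breaks this. -/
theorem exists_dual_log_norm_le (hF : AnalyticOnNhd ℂ F (closedBall c |R|)) (hc : F c ≠ 0) :
    ∃ g : StrongDual ℂ E, ‖g (F c)‖ = ‖F c‖ ∧
      AnalyticOnNhd ℂ (fun w => g (F w)) (closedBall c |R|) ∧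
      ∀ᶠ w in codiscreteWithin (sphere c |R|), Real.log ‖g (F w)‖ ≤ Real.log ‖F w‖ := by
  obtain ⟨g, hg_norm, hg⟩ := exists_dual_vector'' ℂ (F c)
  have hgF : AnalyticOnNhd ℂ (fun w => g (F w)) (closedBall c |R|) := g.comp_analyticOnNhd hF
  have hgc : ‖g (F c)‖ = ‖F c‖ := by rw [hg, RCLike.norm_ofReal, abs_norm]
  have hgc_ne : g (F c) ≠ 0 := by rwa [← norm_ne_zero_iff, hgc, norm_ne_zero_iff]
  refine ⟨g, hgc, hgF, ?_⟩
  filter_upwards [eventually_ne_zero_codiscreteWithin_sphere hgF hgc_ne] with w hw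
  exact Real.log_le_log (norm_pos_iff.2 hw)
    ((g.le_of_opNorm_le hg_norm (F w)).trans_eq (one_mul _))

theorem circleIntegrable_log_norm (hR : R ≠ 0) (hF : AnalyticOnNhd ℂ F (closedBall c |R|))
    (hc : F c ≠ 0) : CircleIntegrable (fun w => Real.log ‖F w‖) c R := by
  obtain ⟨g, -, hgF, hg_le⟩ := exists_dual_log_norm_le hF hc
  have hFcont : Continuous fun θ : ℝ => F (circleMap c R θ) :=
    hF.continuousOn.comp_continuous (continuous_circleMap c R) fun θ =>
      sphere_subset_closedBall (circleMap_mem_sphere' c R θ)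
  have hlower : ∀ᵐ θ : ℝ, Real.log ‖g (F (circleMap c R θ))‖ ≤ Real.log ‖F (circleMap c R θ)‖ :=
    ae_circleMap_of_codiscreteWithin hR hg_le
  have hlower_int : CircleIntegrable (fun w => Real.log ‖g (F w)‖) c R :=
    (hgF.mono sphere_subset_closedBall).meromorphicOn.circleIntegrable_log_norm
  have hupper_int : IntervalIntegrable (fun θ => ‖F (circleMap c R θ)‖) volume 0 (2 * π) :=
    hFcont.norm.intervalIntegrable _ _
  rw [CircleIntegrable, intervalIntegrable_iff] at hlower_int ⊢
  rw [intervalIntegrable_iff] at hupper_int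
  exact integrable_of_le_of_le hFcont.norm.measurable.log.aestronglyMeasurable
    (ae_restrict_of_ae hlower) (ae_of_all _ fun θ => Real.log_le_self (norm_nonneg _))
    hlower_int hupper_int

theorem log_norm_le_circleAverage_log_norm (hR : R ≠ 0)
    (hF : AnalyticOnNhd ℂ F (closedBall c |R|)) (hc : F c ≠ 0) :
    Real.log ‖F c‖ ≤ Real.circleAverage (fun w => Real.log ‖F w‖) c R := by
  obtain ⟨g, hgc, hgF, hg_le⟩ := exists_dual_log_norm_le hF hc
  have hgc_ne : g (F c) ≠ 0 := by rwa [← norm_ne_zero_iff, hgc, norm_ne_zero_iff]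
  have hgF_int : CircleIntegrable (fun w => Real.log ‖g (F w)‖) c R :=
    (hgF.mono sphere_subset_closedBall).meromorphicOn.circleIntegrable_log_norm
  calc Real.log ‖F c‖ = Real.log ‖g (F c)‖ := by rw [hgc]
    _ ≤ Real.circleAverage (fun w => Real.log ‖g (F w)‖) c R :=
      log_norm_le_circleAverage_log_norm_of_complex hR hgF hgc_ne
    _ ≤ Real.circleAverage (fun w => Real.log ‖F w‖) c R :=
      circleAverage_mono_codiscreteWithin hR hgF_int (circleIntegrable_log_norm hR hF hc) hg_le

end Jensen

section Cocycle

open Function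

/-- The `n`-step product `T(f^{n-1} x) ⋯ T(f x) T(x)` of the cocycle generated by `T` over the
dynamics `f`. -/
def cocycleProd {X M : Type*} [Monoid M] (T : X → M) (f : X → X) (n : ℕ) (x : X) : M :=
  ((List.range n).reverse.map fun j => T (f^[j] x)).prod

variable {X Y M : Type*} [Monoid M]

@[simp]
theorem cocycleProd_zero (T : X → M) (f : X → X) (x : X) : cocycleProd T f 0 x = 1 := rfl

theorem cocycleProd_succ (T : X → M) (f : X → X) (n : ℕ) (x : X) :
    cocycleProd T f (n + 1) x = T (f^[n] x) * cocycleProd T f n x := by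
  simp [cocycleProd, List.range_succ]

theorem cocycleProd_of_isFixedPt {f : X → X} {x : X} (hx : IsFixedPt f x) (T : X → M) (n : ℕ) :
    cocycleProd T f n x = T x ^ n := by
  simp [cocycleProd, (hx.iterate _).eq]

theorem cocycleProd_comp_semiconj {h : X → Y} {f : X → X} {g : Y → Y} (hfg : Semiconj h f g)
    (T : Y → M) (n : ℕ) (x : X) : cocycleProd (T ∘ h) f n x = cocycleProd T g n (h x) := by
  simp only [cocycleProd, comp_apply, (hfg.iterate_right _).eq]

theorem cocycleProd_smul {G : Type*} [CommMonoid G] [MulAction G M] [IsScalarTower G M M]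
    [SMulCommClass G M M] (c : X → G) (T : X → M) (f : X → X) (n : ℕ) (x : X) :
    cocycleProd (c • T) f n x = cocycleProd c f n x • cocycleProd T f n x := by
  induction n with
  | zero => simp
  | succ n ih => simp only [cocycleProd_succ, ih, Pi.smul_apply', smul_mul_smul_comm]

theorem cocycleProd_congr_ae [MeasurableSpace X] {μ : MeasureTheory.Measure X} {f : X → X}
    (hf : MeasureTheory.Measure.QuasiMeasurePreserving f μ μ) {S T : X → M} (h : S =ᵐ[μ] T)
    (n : ℕ) : cocycleProd S f n =ᵐ[μ] cocycleProd T f n := by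
  have hiter : ∀ᵐ x ∂μ, ∀ j, S (f^[j] x) = T (f^[j] x) :=
    MeasureTheory.ae_all_iff.2 fun j => (hf.iterate j).ae_eq_comp h
  filter_upwards [hiter] with x hx
  simp only [cocycleProd, hx]

variable {𝕜 E 𝔸 : Type*} [NontriviallyNormedField 𝕜] [NormedAddCommGroup E] [NormedSpace 𝕜 E]
  [NormedRing 𝔸] [NormedAlgebra 𝕜 𝔸]

theorem analyticOnNhd_iterate {f : E → E} {s : Set E} (hf : AnalyticOnNhd 𝕜 f s)
    (hs : Set.MapsTo f s s) (n : ℕ) : AnalyticOnNhd 𝕜 f^[n] s := by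
  induction n with
  | zero => exact analyticOnNhd_id
  | succ n ih => exact ih.comp hf hs

theorem analyticOnNhd_cocycleProd {T : E → 𝔸} {f : E → E} {s : Set E}
    (hT : AnalyticOnNhd 𝕜 T s) (hf : AnalyticOnNhd 𝕜 f s) (hs : Set.MapsTo f s s) (n : ℕ) :
    AnalyticOnNhd 𝕜 (cocycleProd T f n) s := by
  induction n with
  | zero => exact analyticOnNhd_const
  | succ n ih =>
    rw [funext (cocycleProd_succ T f n)]
    exact (hT.comp (analyticOnNhd_iterate hf hs n) (hs.iterate n)).mul ih

end Cocycle

section Herman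

open Metric MeasureTheory
open scoped FourierTransform

theorem circleAverage_eq_integral_fourierChar {E : Type*} [NormedAddCommGroup E] [NormedSpace ℝ E]
    (f : ℂ → E) (c : ℂ) (R : ℝ) :
    Real.circleAverage f c R = ∫ x in (0:ℝ)..1, f (c + R * 𝐞 x) := by
  have hscale := intervalIntegral.smul_integral_comp_mul_left (a := 0) (b := 1)
    (fun θ => f (circleMap c R θ)) (2 * π)
  rw [mul_zero, mul_one] at hscale
  rw [Real.circleAverage_def, ← hscale, inv_smul_smul₀ Real.two_pi_pos.ne']
  rfl

variable {𝔸 : Type*} [NormedRing 𝔸] [NormedAlgebra ℂ 𝔸]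

theorem log_norm_pow_le_integral_log_norm_cocycleProd {P : ℂ → 𝔸}
    (hP : AnalyticOnNhd ℂ P (closedBall 0 1)) (b : ℝ) (n : ℕ) (h0 : P 0 ^ n ≠ 0) :
    Real.log ‖P 0 ^ n‖ ≤
      ∫ x in (0:ℝ)..1, Real.log ‖cocycleProd (fun x : ℝ => P (𝐞 x)) (· + b) n x‖ := by
  set rot : ℂ → ℂ := fun w => 𝐞 b * w
  have hrot : AnalyticOnNhd ℂ rot (closedBall 0 |1|) := analyticOnNhd_const.mul analyticOnNhd_id
  have hrot_maps : Set.MapsTo rot (closedBall 0 |1|) (closedBall 0 |1|) := fun w hw => by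
    simpa only [rot, mem_closedBall_zero_iff, norm_mul, Circle.norm_coe, one_mul] using hw
  have hsemiconj : Function.Semiconj (fun x : ℝ => (𝐞 x : ℂ)) (· + b) rot := fun x => by
    simp [rot, AddChar.map_add_eq_mul, mul_comm]
  have hfixed : cocycleProd P rot n 0 = P 0 ^ n :=
    cocycleProd_of_isFixedPt (mul_zero _) P n
  have hjensen := log_norm_le_circleAverage_log_norm one_ne_zero
    (analyticOnNhd_cocycleProd (by simpa using hP) hrot hrot_maps n) (hfixed ▸ h0)
  rw [hfixed, circleAverage_eq_integral_fourierChar] at hjensen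
  refine hjensen.trans_eq (intervalIntegral.integral_congr fun x _ => ?_)
  simp [← cocycleProd_comp_semiconj hsemiconj, Function.comp_def]

theorem log_norm_pow_le_integral_log_norm_cocycleProd_of_smul {P : ℂ → 𝔸} {T : ℝ → 𝔸}
    {c : ℝ → Circle} (hP : AnalyticOnNhd ℂ P (closedBall 0 1))
    (hPT : (fun x : ℝ => P (𝐞 x)) =ᵐ[volume] c • T) (b : ℝ) (n : ℕ) (h0 : P 0 ^ n ≠ 0) :
    Real.log ‖P 0 ^ n‖ ≤ ∫ x in (0:ℝ)..1, Real.log ‖cocycleProd T (· + b) n x‖ := by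
  refine (log_norm_pow_le_integral_log_norm_cocycleProd hP b n h0).trans_eq ?_
  have hprod := cocycleProd_congr_ae (quasiMeasurePreserving_add_right volume b) hPT n
  refine intervalIntegral.integral_congr_ae (hprod.mono fun x hx _ => ?_)
  simp only [hx, cocycleProd_smul, Circle.smul_def, norm_smul, Circle.norm_coe, one_mul]

end Herman

section MatrixNorm

open scoped Matrix.Norms.L2Operator

theorem one_le_l2_opNorm_of_one_le_norm_det {𝕜 ι : Type*} [RCLike 𝕜] [Fintype ι] [DecidableEq ι]
    [Nonempty ι] {A : Matrix ι ι 𝕜} (hA : 1 ≤ ‖A.det‖) : 1 ≤ ‖A‖ := by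
  by_contra! hlt
  have hpow := tendsto_pow_atTop_nhds_zero_of_norm_lt_one hlt
  have hdet := ((continuous_id.matrix_det.tendsto (0 : Matrix ι ι 𝕜)).comp hpow).norm
  have hge : 1 ≤ ‖(0 : Matrix ι ι 𝕜).det‖ := ge_of_tendsto' hdet fun k => by
    simpa using one_le_pow₀ hA
  rw [Matrix.det_zero, norm_zero] at hge
  exact hge.not_gt one_pos

theorem opNorm2_eq_l2_opNorm (A : Matrix (Fin 2) (Fin 2) ℂ) : opNorm2 A = ‖A‖ :=
  Matrix.l2_opNorm_toEuclideanCLM A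

end MatrixNorm

section TransferMatrix

open scoped FourierTransform

/-- The zeroth Fourier coefficient of `x ↦ B(x,z)`. -/
def bCoeffZero (z : ℂ) : Matrix (Fin 2) (Fin 2) ℂ := !![2 * z, -2; 2, 0]

/-- The common Fourier coefficient of `x ↦ B(x,z)` at the frequencies `±1`, called `M` in the
theorem. -/
def bCoeffOne (α lam : ℝ) (z : ℂ) : Matrix (Fin 2) (Fin 2) ℂ :=
  !![-((α : ℂ) * z + 2 * (lam : ℂ)), (α : ℂ); -(α : ℂ), 0]

/-- The quadratic matrix polynomial in `w` which equals `w • B(x,z)` at `w = e^{2πix}`. -/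
noncomputable def bPoly (α lam : ℝ) (z w : ℂ) : Matrix (Fin 2) (Fin 2) ℂ :=
  w • bCoeffZero z + (w ^ 2 + 1) • bCoeffOne α lam z

theorem bPoly_zero (α lam : ℝ) (z : ℂ) : bPoly α lam z 0 = bCoeffOne α lam z := by
  simp [bPoly]

open scoped Matrix.Norms.L2Operator in
theorem analyticOnNhd_bPoly (α lam : ℝ) (z : ℂ) (s : Set ℂ) :
    AnalyticOnNhd ℂ (bPoly α lam z) s := by
  intro w _
  unfold bPoly
  fun_prop

theorem bMat_eq_add_smul {α x : ℝ} (hx : 1 - α * Real.cos (2 * π * x) ≠ 0) (lam : ℝ) (z : ℂ) :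
    bMat α lam x z =
      bCoeffZero z + (2 * Real.cos (2 * π * x) : ℂ) • bCoeffOne α lam z := by
  rw [bMat, tMat, potV]
  generalize Real.cos (2 * π * x) = t at hx ⊢
  have hcancel : (2 - 2 * (α : ℂ) * t) * (2 * lam * t / (1 - α * t)) = 4 * lam * t := by
    have hx' : 1 - (α : ℂ) * t ≠ 0 := mod_cast hx
    field_simp
    ring
  push_cast
  simp only [bCoeffZero, bCoeffOne, Matrix.smul_of, Matrix.of_add_of, Matrix.smul_cons,
    Matrix.smul_empty, smul_eq_mul, Matrix.cons_add_cons, Matrix.empty_add_empty,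
    EmbeddingLike.apply_eq_iff_eq, Matrix.vecCons_inj, and_true]
  exact ⟨⟨by linear_combination -hcancel, by ring⟩, by ring, by ring⟩

theorem ae_one_sub_mul_cos_ne_zero (α : ℝ) : ∀ᵐ x : ℝ, 1 - α * Real.cos (2 * π * x) ≠ 0 := by
  have hf : AnalyticOnNhd ℝ (fun x : ℝ => 1 - α * Real.cos (2 * π * x)) Set.univ := by
    intro x _; fun_prop
  have hquarter : 1 - α * Real.cos (2 * π * (1 / 4)) ≠ 0 := by
    rw [show 2 * π * (1 / 4) = π / 2 by ring, Real.cos_pi_div_two]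
    norm_num
  rw [← MeasureTheory.Measure.restrict_univ (μ := MeasureTheory.volume)]
  exact ae_restrict_le_codiscreteWithin MeasurableSet.univ
    (hf.preimage_zero_mem_codiscrete hquarter)

theorem fourierChar_mul_two_cos (x : ℝ) :
    (𝐞 x : ℂ) * (2 * Real.cos (2 * π * x)) = 𝐞 x ^ 2 + 1 := by
  rw [Real.fourierChar_apply, Complex.ofReal_cos, Complex.two_cos, mul_add, ← Complex.exp_add,
    ← Complex.exp_add, sq, ← Complex.exp_add, neg_mul, add_neg_cancel, Complex.exp_zero]

theorem bPoly_fourierChar_ae_eq (α lam : ℝ) (z : ℂ) :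
    (fun x : ℝ => bPoly α lam z (𝐞 x)) =ᵐ[MeasureTheory.volume]
      (𝐞 : ℝ → Circle) • fun x => bMat α lam x z := by
  filter_upwards [ae_one_sub_mul_cos_ne_zero α] with x hx
  rw [Pi.smul_apply', bMat_eq_add_smul hx, bPoly, ← fourierChar_mul_two_cos, Circle.smul_def,
    smul_add, smul_smul]

theorem bProd_eq_cocycleProd (α lam b : ℝ) (n : ℕ) (x : ℝ) (z : ℂ) :
    bProd α lam b n x z = cocycleProd (fun y => bMat α lam y z) (· + b) n x := by
  simp [bProd, cocycleProd, ← List.map_eq_flatMap, Function.comp_def]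

theorem bCoeffOne_pow_ne_zero {α : ℝ} (hα : α ≠ 0) (lam : ℝ) (z : ℂ) (n : ℕ) :
    bCoeffOne α lam z ^ n ≠ 0 := fun h => by
  have hdet := congrArg Matrix.det h
  rw [Matrix.det_pow, Matrix.det_zero, bCoeffOne, Matrix.det_fin_two_of] at hdet
  simpa [hα] using eq_zero_of_pow_eq_zero hdet

theorem det_bProd_zero_left (lam b : ℝ) (n : ℕ) (x : ℝ) (z : ℂ) :
    (bProd 0 lam b n x z).det = 4 ^ n := by
  have hdet (y : ℝ) : (bMat 0 lam y z).det = 4 := by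
    rw [bMat, tMat, Matrix.det_smul, Matrix.det_fin_two_of]
    norm_num
  rw [bProd_eq_cocycleProd]
  induction n with
  | zero => simp
  | succ n ih => rw [cocycleProd_succ, Matrix.det_mul, ih, hdet, pow_succ']

theorem one_le_opNorm2_bProd_zero_left (lam b : ℝ) (n : ℕ) (x : ℝ) (z : ℂ) :
    1 ≤ opNorm2 (bProd 0 lam b n x z) := by
  rw [opNorm2_eq_l2_opNorm]
  refine one_le_l2_opNorm_of_one_le_norm_det ?_
  rw [det_bProd_zero_left, norm_pow]
  exact one_le_pow₀ (by norm_num)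

open scoped Matrix.Norms.L2Operator in
theorem log_opNorm2_bCoeffOne_pow_le_integral {α lam : ℝ} {n : ℕ} {z : ℂ}
    (h0 : bCoeffOne α lam z ^ n ≠ 0) (b : ℝ) :
    Real.log (opNorm2 (bCoeffOne α lam z ^ n)) ≤
      ∫ x in (0:ℝ)..1, Real.log (opNorm2 (bProd α lam b n x z)) := by
  simp only [opNorm2_eq_l2_opNorm, bProd_eq_cocycleProd, ← bPoly_zero] at h0 ⊢
  exact log_norm_pow_le_integral_log_norm_cocycleProd_of_smul (analyticOnNhd_bPoly α lam z _)
    (bPoly_fourierChar_ae_eq α lam z) b n h0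

end TransferMatrix

theorem integral_log_bProd_ge_general (α lam b : ℝ) (n : ℕ) (z : ℂ) :
    Real.log (opNorm2 ((!![-((α : ℂ) * z + 2 * (lam : ℂ)), (α : ℂ); -(α : ℂ), 0]) ^ n)) ≤
      ∫ x in (0:ℝ)..(1:ℝ), Real.log (opNorm2 (bProd α lam b n x z)) := by
  change Real.log (opNorm2 (bCoeffOne α lam z ^ n)) ≤ _
  by_cases h0 : bCoeffOne α lam z ^ n = 0
  · obtain rfl : α = 0 := not_not.1 fun hα => bCoeffOne_pow_ne_zero hα lam z n h0
    rw [h0, opNorm2, map_zero, norm_zero, Real.log_zero]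
    exact intervalIntegral.integral_nonneg zero_le_one fun x _ =>
      Real.log_nonneg (one_le_opNorm2_bProd_zero_left lam b n x z)
  · exact log_opNorm2_bCoeffOne_pow_le_integral h0 b

/-- for every `n ≥ 1` and `z ∈ ℂ`,
`∫₀¹ log‖B_n(x,z)‖ dx ≥ log‖Mⁿ‖` where `M = [[-(αz+2λ), α],[-α, 0]]`. -/
theorem integral_log_bProd_ge (α lam b : ℝ) (hα : α ∈ Set.Ioo (-1 : ℝ) 1)
    (hb : Irrational b) (n : ℕ) (hn : 1 ≤ n) (z : ℂ) :
    Real.log (opNorm2 ((!![-((α : ℂ) * z + 2 * (lam : ℂ)), (α : ℂ); -(α : ℂ), 0]) ^ n)) ≤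
      ∫ x in (0:ℝ)..(1:ℝ), Real.log (opNorm2 (bProd α lam b n x z)) :=
  integral_log_bProd_ge_general α lam b n z
end

section
/- For every α ∈ (−1,1), ∫₀¹ log|2 − 2αcos(2πx)| dx = log(1 + √(1−α²)). -/
open scoped Real

/-!
On the unit circle, `2 - 2α cos θ` has the same modulus as the quadratic `2z - α(z² + 1)`, so the
integral is the logarithmic Mahler measure of this quadratic. With `s² = 1 - α²` and `t = 1 + s`,
`t (2z - α(z² + 1)) = (tz - α)(t - αz)`, and choosing `Re s ≥ 0` makes `‖α‖ ≤ ‖t‖`, so that each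
linear factor has Mahler measure `‖t‖`.
-/

theorem integral_comp_circleMap_two_pi_mul {E : Type*} [NormedAddCommGroup E] [NormedSpace ℝ E]
    (f : ℂ → E) (c : ℂ) (R : ℝ) :
    ∫ x in (0 : ℝ)..1, f (circleMap c R (2 * π * x)) = Real.circleAverage f c R := by
  rw [intervalIntegral.integral_comp_mul_left (fun θ ↦ f (circleMap c R θ)) Real.two_pi_pos.ne',
    mul_zero, mul_one, Real.circleAverage_def]

theorem circleMap_sq_add_one (θ : ℝ) :
    circleMap 0 1 θ ^ 2 + 1 = 2 * Real.cos θ * circleMap 0 1 θ := by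
  have exp_mul_exp_neg : Complex.exp (θ * Complex.I) * Complex.exp (-θ * Complex.I) = 1 := by
    rw [← Complex.exp_add, neg_mul, add_neg_cancel, Complex.exp_zero]
  rw [Complex.ofReal_cos, Complex.two_cos, circleMap_zero, Complex.ofReal_one, one_mul]
  linear_combination -exp_mul_exp_neg

theorem norm_one_sub_le_norm_one_add {s : ℂ} (hs : 0 ≤ s.re) : ‖1 - s‖ ≤ ‖1 + s‖ := by
  rw [← sq_le_sq₀ (norm_nonneg _) (norm_nonneg _), ← Complex.normSq_eq_norm_sq,
    ← Complex.normSq_eq_norm_sq, Complex.normSq_sub, Complex.normSq_add]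
  simp only [one_mul, Complex.conj_re]
  linarith

theorem norm_le_norm_one_add_of_sq_eq_one_sub_sq {α s : ℂ} (hs : s ^ 2 = 1 - α ^ 2)
    (hre : 0 ≤ s.re) : ‖α‖ ≤ ‖1 + s‖ := by
  rw [← sq_le_sq₀ (norm_nonneg _) (norm_nonneg _)]
  calc ‖α‖ ^ 2 = ‖1 - s‖ * ‖1 + s‖ := by
        rw [← norm_pow, ← norm_mul]
        congr 1
        linear_combination hs
    _ ≤ ‖1 + s‖ * ‖1 + s‖ := by gcongr; exact norm_one_sub_le_norm_one_add hre
    _ = ‖1 + s‖ ^ 2 := (sq _).symm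

theorem complex_sqrt_sq (z : ℂ) : Complex.sqrt z ^ 2 = z :=
  Complex.cpow_ofNat_inv_pow z 2

theorem re_complex_sqrt_nonneg (z : ℂ) : 0 ≤ (Complex.sqrt z).re := by
  rw [Complex.sqrt, Complex.cpow_inv_two_re]
  exact Real.sqrt_nonneg _

theorem norm_one_add_complex_sqrt_ofReal {a : ℝ} (ha : 0 ≤ a) :
    ‖1 + Complex.sqrt a‖ = 1 + √a := by
  rw [Complex.sqrt_of_nonneg (by simpa using ha), Complex.ofReal_re, ← Complex.ofReal_one,
    ← Complex.ofReal_add, Complex.norm_of_nonneg (by positivity)]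

section MahlerMeasure

open Polynomial

theorem mahlerMeasure_C_mul_X_add_C_eq_max (a b : ℂ) :
    (C a * X + C b).mahlerMeasure = max ‖a‖ ‖b‖ := by
  obtain rfl | ha := eq_or_ne a 0
  · simp
  · exact mahlerMeasure_C_mul_X_add_C ha b

/-- The quadratic `2z - α(z² + 1)`, that is, `z` times the Laurent polynomial `2 - α(z + z⁻¹)`
which restricts to `2 - 2α cos θ` on the unit circle. -/
noncomputable def twoSubCosPoly {R : Type*} [CommRing R] (α : R) : R[X] :=
  C 2 * X - C α * (X ^ 2 + 1)

theorem C_one_add_mul_twoSubCosPoly {R : Type*} [CommRing R] {α s : R} (hs : s ^ 2 = 1 - α ^ 2) :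
    C (1 + s) * twoSubCosPoly α = (C (1 + s) * X + C (-α)) * (C (-α) * X + C (1 + s)) := by
  have hC : (C s : R[X]) ^ 2 = 1 - C α ^ 2 := by simpa using congrArg C hs
  simp only [twoSubCosPoly, C_add, C_neg, C_1, C_ofNat]
  linear_combination -X * hC

theorem mahlerMeasure_twoSubCosPoly {α s : ℂ} (hs : s ^ 2 = 1 - α ^ 2) (hre : 0 ≤ s.re) :
    (twoSubCosPoly α).mahlerMeasure = ‖1 + s‖ := by
  have ht : 1 + s ≠ 0 := fun h ↦ by
    have re_eq : 1 + s.re = 0 := by simpa using congrArg Complex.re h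
    linarith
  have hα : ‖-α‖ ≤ ‖1 + s‖ := by
    rw [norm_neg]
    exact norm_le_norm_one_add_of_sq_eq_one_sub_sq hs hre
  have h := congrArg mahlerMeasure (C_one_add_mul_twoSubCosPoly hs)
  rw [mahlerMeasure_mul, mahlerMeasure_mul, mahlerMeasure_const,
    mahlerMeasure_C_mul_X_add_C_eq_max, mahlerMeasure_C_mul_X_add_C_eq_max, max_eq_left hα,
    max_eq_right hα] at h
  exact mul_left_cancel₀ (norm_ne_zero_iff.mpr ht) h

theorem norm_eval_twoSubCosPoly_circleMap (α : ℂ) (θ : ℝ) :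
    ‖(twoSubCosPoly α).eval (circleMap 0 1 θ)‖ = ‖2 - 2 * α * Real.cos θ‖ := by
  have factor : (twoSubCosPoly α).eval (circleMap 0 1 θ) =
      (2 - 2 * α * Real.cos θ) * circleMap 0 1 θ := by
    simp only [twoSubCosPoly, eval_sub, eval_mul, eval_add, eval_pow, eval_C, eval_X, eval_one]
    linear_combination -α * circleMap_sq_add_one θ
  rw [factor, norm_mul, norm_circleMap_zero, abs_one, mul_one]

theorem integral_log_norm_two_sub_cos_eq_logMahlerMeasure (α : ℂ) :
    ∫ x in (0 : ℝ)..1, Real.log ‖2 - 2 * α * Real.cos (2 * π * x)‖ =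
      (twoSubCosPoly α).logMahlerMeasure := by
  simp_rw [← norm_eval_twoSubCosPoly_circleMap]
  exact integral_comp_circleMap_two_pi_mul (fun z ↦ Real.log ‖(twoSubCosPoly α).eval z‖) 0 1

theorem integral_log_abs_two_sub_cos_general (α : ℂ) :
    ∫ x in (0 : ℝ)..1, Real.log ‖2 - 2 * α * Real.cos (2 * π * x)‖ =
      Real.log ‖1 + Complex.sqrt (1 - α ^ 2)‖ := by
  rw [integral_log_norm_two_sub_cos_eq_logMahlerMeasure, logMahlerMeasure_eq_log_MahlerMeasure,
    mahlerMeasure_twoSubCosPoly (complex_sqrt_sq _) (re_complex_sqrt_nonneg _)]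

end MahlerMeasure

/-- for every `α ∈ (-1,1)`,
`∫₀¹ log|2 - 2αcos(2πx)| dx = log(1 + √(1-α²))`. -/
theorem integral_log_abs_two_sub_cos (α : ℝ) (hα : α ∈ Set.Ioo (-1 : ℝ) 1) :
    ∫ x in (0:ℝ)..(1:ℝ), Real.log |2 - 2 * α * Real.cos (2 * Real.pi * x)| =
      Real.log (1 + Real.sqrt (1 - α ^ 2)) := by
  have h := integral_log_abs_two_sub_cos_general α
  norm_cast at h
  rwa [norm_one_add_complex_sqrt_ofReal (by nlinarith [hα.1, hα.2])] at h
end
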